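/- Let p be a prime, f ∈ {0,1,…,p−1} an integer, and ε, θ ∈ ℝ. Then for any two distinct points x₁ ≠ x₂ of the constellation Λ_p, | ((f+ε)·x₁ + θ)* − ((f+ε)·x₂ + θ)* | ≥ (L/p)·δ(p,ε). In particular the minimum distance of the constellation { ((f+ε)·x + θ)* : x ∈ Λ_p } is at least (L/p)·δ(p,ε). -/

import Mathlib

open MeasureTheory ProbabilityTheory Real Filter
open scoped ENNReal

noncomputable section

/-- Reduction of `x` modulo the half-open interval `[a, b)`. -/
def modIco (a b x : ℝ) : ℝ := a + (b - a) * Int.fract ((x - a) / (b - a))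

/-- `L = √12`. -/
def Lc : ℝ := Real.sqrt 12

/-- `x*`: reduction of `x` modulo the basic interval `I = [-L/2, L/2)`. -/
def starI (x : ℝ) : ℝ := modIco (-(Lc / 2)) (Lc / 2) x

/-- `δ(p, γ) = min_{l ∈ {1,…,p−1}} |l·γ − ⌊l·γ⌉|`. -/
def deltaP (p : ℕ) (γ : ℝ) : ℝ :=
  sInf {d : ℝ | ∃ l : ℕ, 1 ≤ l ∧ l ≤ p - 1 ∧ d = |(l : ℝ) * γ - round ((l : ℝ) * γ)|}

/-- The set `P'(γ)` of admissible primes (depends on the SNR). -/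
def Pgood (SNR : ℝ) (γ : ℝ) : Set ℕ :=
  {p | p.Prime ∧
    Real.exp (-(3 * SNR / (2 * (p : ℝ) ^ 2)) * (modIco (-(1/4)) (1/4) γ) ^ 2) <
      1 - 2 * (p : ℝ) * Real.exp (-(3 * SNR / 8))}

/-- First rate expression in the achievable-rate theorem. -/
def rateA (SNR : ℝ) (p : ℕ) (γ : ℝ) : ℝ :=
  -(1/2) * Real.logb 2 (1/(p : ℝ)^2 + Real.sqrt (2 * π / (3 * SNR))
    + (1/(p : ℝ)) * Real.exp (-(3 * SNR / (2 * (p : ℝ)^2)) * (deltaP p γ)^2)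
    + 2 * Real.exp (-(3 * SNR / 8)))

/-- Second rate expression in the achievable-rate theorem. -/
def rateB (SNR : ℝ) (p : ℕ) (γ : ℝ) : ℝ :=
  -Real.logb 2 (1/(p : ℝ) + Real.sqrt (2 * π / (3 * (deltaP p γ)^2 * SNR))
    + 2 * Real.exp (-(3 * SNR / 8)))

/-- The `k`-th point of the constellation `Λ_p`. -/
def constPt (p : ℕ) (k : ℕ) : ℝ := starI (Lc / (p : ℝ) * (k : ℝ))

/-- The constellation `Λ_p` as a finite set of reals. -/
def constSet (p : ℕ) : Finset ℝ := (Finset.range p).image (constPt p)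

/-- The uniform probability measure on the constellation `Λ_p`. -/
def uniformConst (p : ℕ) : Measure ℝ :=
  (p : ℝ≥0∞)⁻¹ • ∑ k ∈ Finset.range p, Measure.dirac (constPt p k)

theorem starI_eq (x : ℝ) : ∃ n : ℤ, starI x = x - Lc * n := by
  have hL : 0 < Lc := Real.sqrt_pos.mpr (by norm_num)
  refine ⟨⌊(x - -(Lc / 2)) / (Lc / 2 - -(Lc / 2))⌋, ?_⟩
  unfold starI modIco
  rw [Int.fract]
  have : Lc / 2 - -(Lc / 2) = Lc := by ring
  rw [this]
  field_simp
  ring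

theorem starI_mem (x : ℝ) : -(Lc / 2) ≤ starI x ∧ starI x < Lc / 2 := by
  have hL : 0 < Lc := Real.sqrt_pos.mpr (by norm_num)
  unfold starI modIco
  have h : Lc / 2 - -(Lc / 2) = Lc := by ring
  rw [h]
  have h0 := Int.fract_nonneg ((x - -(Lc / 2)) / Lc)
  have h1 := Int.fract_lt_one ((x - -(Lc / 2)) / Lc)
  constructor <;> nlinarith

theorem deltaP_le (p : ℕ) (ε : ℝ) (m N : ℤ) (hm : m ≠ 0) (hmp : |m| < p) :
    deltaP p ε ≤ |ε * m - N| := by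
  have key : ∀ (l : ℕ) (K : ℤ), 1 ≤ l → l < p → deltaP p ε ≤ |(l : ℝ) * ε - K| := by
    intro l K h1 h2
    refine le_trans (csInf_le ⟨0, ?_⟩ ⟨l, h1, by omega, rfl⟩) (round_le _ _)
    rintro d ⟨_, _, _, rfl⟩
    exact abs_nonneg _
  obtain ⟨l, hl | hl⟩ := Int.eq_nat_or_neg m
  · subst hl
    have := key l N (by omega) (by simpa using hmp)
    simpa [mul_comm] using this
  · subst hl
    have := key l (-N) (by omega) (by simpa using hmp)
    rw [← abs_neg] at this
    convert this using 2
    push_cast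
    ring

/-- **Lemma 11.** The minimum distance of the constellation
`{((f+ε)·x + θ)* : x ∈ Λ_p}` is at least `(L/p)·δ(p,ε)`. -/
theorem constellation_min_distance
    (p : ℕ) (hp : p.Prime) (f : ℕ) (hf : f ≤ p - 1) (ε θ : ℝ) :
    ∀ x₁ ∈ constSet p, ∀ x₂ ∈ constSet p, x₁ ≠ x₂ →
      (Lc / (p : ℝ)) * deltaP p ε
        ≤ |starI (((f : ℝ) + ε) * x₁ + θ) - starI (((f : ℝ) + ε) * x₂ + θ)| := by
  intro x₁ h₁ x₂ h₂ hne
  have hL : 0 < Lc := Real.sqrt_pos.mpr (by norm_num)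
  have hp0 : (0 : ℝ) < p := by exact_mod_cast hp.pos
  simp only [constSet, Finset.mem_image, Finset.mem_range, constPt] at h₁ h₂
  obtain ⟨k₁, -, h₁⟩ := h₁
  obtain ⟨k₂, -, h₂⟩ := h₂
  have b₁ := starI_mem (Lc / p * k₁)
  have b₂ := starI_mem (Lc / p * k₂)
  obtain ⟨n₁, e₁⟩ := starI_eq (Lc / p * k₁)
  obtain ⟨n₂, e₂⟩ := starI_eq (Lc / p * k₂)
  rw [h₁] at b₁ e₁
  rw [h₂] at b₂ e₂
  obtain ⟨q₁, g₁⟩ := starI_eq (((f : ℝ) + ε) * x₁ + θ)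
  obtain ⟨q₂, g₂⟩ := starI_eq (((f : ℝ) + ε) * x₂ + θ)
  obtain ⟨m, hm⟩ : ∃ m : ℤ, m = (k₁ : ℤ) - k₂ - p * (n₁ - n₂) := ⟨_, rfl⟩
  have hc : 0 < Lc / p := div_pos hL hp0
  have hLp : Lc = Lc / p * p := by field_simp
  have hd : x₁ - x₂ = Lc / p * m := by
    rw [e₁, e₂, hm]
    push_cast
    field_simp
    ring
  have hm0 : m ≠ 0 := by
    rintro h
    apply hne
    rw [h] at hd
    simpa [sub_eq_zero] using hd
  have hmp : |m| < p := by
    have : |(m : ℝ)| < p := by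
      have h : |x₁ - x₂| < Lc := by rw [abs_lt]; constructor <;> linarith
      rw [hd, abs_mul, abs_of_pos hc] at h
      refine lt_of_mul_lt_mul_left ?_ hc.le
      rwa [← hLp]
    exact_mod_cast this
  have hfin : starI (((f : ℝ) + ε) * x₁ + θ) - starI (((f : ℝ) + ε) * x₂ + θ)
      = Lc / p * (ε * m - ((p * (q₁ - q₂) - f * m : ℤ) : ℝ)) := by
    rw [g₁, g₂]
    have : Lc / p * (ε * m - ((p * (q₁ - q₂) - f * m : ℤ) : ℝ))
        = (f + ε) * (Lc / p * m) - (Lc / p * p) * (q₁ - q₂) := by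
      push_cast
      ring
    rw [this, ← hd, ← hLp]
    ring
  rw [hfin, abs_mul, abs_of_pos hc]
  exact mul_le_mul_of_nonneg_left (deltaP_le p ε m _ hm0 hmp) hc.le
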